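/- Let p ≥ 1 and let T₁, T₂ be ℂ-linear involutions of ℂ^{2p} such that dim_ℂ ker(T₁ − id) = p, dim_ℂ ker(T₂ − id) = p, and ker(T₁ − id) ∩ ker(T₂ − id) = {0}. If S := T₁ ∘ T₂ has 2p distinct eigenvalues, then neither 1 nor −1 is an eigenvalue of S. -/

import Mathlib

/-!
A product `S = T₁T₂` of two involutions satisfies `S⁻¹ = T₂T₁`, and `T₁T₂` and `T₂T₁` have the same
characteristic polynomial `χ`. Hence `χ` is, up to a sign, its own reverse; in even dimension with
`det S = 1` the sign is `+1`. The determinant of an involution is `-1` to the codimension of its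
fixed space, so `det S = 1` as soon as the two fixed spaces have dimensions of the same parity.
For `χ` of degree `2m` equal to its own reverse and `ε = ±1`, pairing the coefficients of `X ^ i`
and `X ^ (2m - i)` gives `ε χ'(ε) = m χ(ε)`, so that if `ε` is a root then it is a multiple root.
-/

open Polynomial Module

section Palindromic

theorem pow_two_mul_sub_of_sq_eq_one {G : Type*} [Monoid G] {ε : G} (hε : ε ^ 2 = 1)
    {m i : ℕ} (hi : i ≤ 2 * m) : ε ^ (2 * m - i) = ε ^ i := by
  calc ε ^ (2 * m - i) = ε ^ (2 * m - i) * (ε ^ 2) ^ i := by rw [hε, one_pow, mul_one]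
    _ = (ε ^ 2) ^ m * ε ^ i := by
      rw [← pow_mul, ← pow_mul, ← pow_add, ← pow_add]
      congr 1
      omega
    _ = ε ^ i := by rw [hε, one_pow, one_mul]

theorem coeff_natDegree_sub_of_reverse_eq_self {R : Type*} [Semiring R] {P : R[X]}
    (hP : P.reverse = P) {i : ℕ} (hi : i ≤ P.natDegree) :
    P.coeff (P.natDegree - i) = P.coeff i := by
  conv_rhs => rw [← hP, coeff_reverse, revAt_le hi]

variable {R : Type*} [CommRing R] {P : R[X]} {m : ℕ} {ε : R}

theorem mul_eval_derivative_sub_mul_eval (P : R[X]) (m : ℕ) (x : R) {n : ℕ}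
    (hn : P.natDegree < n) :
    x * P.derivative.eval x - m * P.eval x =
      ∑ i ∈ Finset.range n, ((i : R) - m) * P.coeff i * x ^ i := by
  have hderiv : x * P.derivative.eval x = ∑ i ∈ Finset.range n, i * P.coeff i * x ^ i := by
    rw [derivative_eval, P.sum_over_range' (by simp) n hn, Finset.mul_sum]
    refine Finset.sum_congr rfl fun i _ => ?_
    cases i with
    | zero => simp
    | succ i => simp only [Nat.add_sub_cancel]; ring
  rw [hderiv, eval_eq_sum_range' hn, Finset.mul_sum, ← Finset.sum_sub_distrib]
  exact Finset.sum_congr rfl fun i _ => by ring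

theorem mul_eval_derivative_of_reverse_eq_self (hP : P.reverse = P) (hdeg : P.natDegree = 2 * m)
    (hε : ε ^ 2 = 1) : ε * P.derivative.eval ε = m * P.eval ε := by
  rw [← sub_eq_zero, mul_eval_derivative_sub_mul_eval P m ε (n := 2 * m + 1) (by omega)]
  -- The middle term `i = m` vanishes, so pairing works without dividing by `2`.
  refine Finset.sum_involution (fun i _ => 2 * m - i) ?cancel ?ne ?mem ?invol
  case cancel =>
    intro i hi
    have hi : i ≤ 2 * m := Finset.mem_range_succ_iff.mp hi
    have hcoeff : P.coeff (2 * m - i) = P.coeff i :=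
      hdeg ▸ coeff_natDegree_sub_of_reverse_eq_self hP (hi.trans_eq hdeg.symm)
    rw [hcoeff, pow_two_mul_sub_of_sq_eq_one hε hi, Nat.cast_sub hi]
    push_cast
    ring
  case ne =>
    intro i _ hne hfix
    obtain rfl : i = m := by omega
    simp at hne
  case mem =>
    intro i _
    exact Finset.mem_range_succ_iff.mpr (Nat.sub_le _ _)
  case invol =>
    intro i hi
    exact Nat.sub_sub_self (Finset.mem_range_succ_iff.mp hi)

theorem not_isRoot_of_separable_of_reverse_eq_self [Nontrivial R] (hsep : P.Separable)
    (hP : P.reverse = P) (hdeg : Even P.natDegree) (hε : ε ^ 2 = 1) : ¬ P.IsRoot ε := by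
  intro hroot
  obtain ⟨m, hm⟩ := hdeg.exists_two_nsmul
  have hεderiv : ε * P.derivative.eval ε = 0 := by
    rw [mul_eval_derivative_of_reverse_eq_self hP hm hε, hroot.eq_zero, mul_zero]
  have hderiv : P.derivative.eval ε = 0 := by
    rw [← one_mul (P.derivative.eval ε), ← hε, sq, mul_assoc, hεderiv, mul_zero]
  exact hsep.eval₂_derivative_ne_zero (RingHom.id R) hroot hderiv

end Palindromic

section Charpoly

variable {R M : Type*} [CommRing R] [AddCommGroup M] [Module R M] [Module.Free R M]
  [Module.Finite R M]

theorem linearMap_charpoly_mul_comm (S T : End R M) : (S * T).charpoly = (T * S).charpoly := by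
  let b := Free.chooseBasis R M
  rw [← LinearMap.charpoly_toMatrix (S * T) b, ← LinearMap.charpoly_toMatrix (T * S) b,
    LinearMap.toMatrix_mul, LinearMap.toMatrix_mul, Matrix.charpoly_mul_comm]

theorem charpoly_eq_det_mul_reverse_of_mul_eq_one {S T : End R M} (h : S * T = 1) :
    T.charpoly = (-1) ^ finrank R M * C (LinearMap.det T) * S.charpoly.reverse := by
  nontriviality R
  let b := Free.chooseBasis R M
  let A := LinearMap.toMatrix b b S
  let B := LinearMap.toMatrix b b T
  have hAB : A * B = 1 := by rw [← LinearMap.toMatrix_mul, h, LinearMap.toMatrix_one]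
  have hA : IsUnit A := IsUnit.of_mul_eq_one B hAB
  have hinv : A⁻¹ = B := Matrix.inv_eq_right_inv hAB
  have hdet : Ring.inverse A.det = B.det := by rw [← Matrix.det_nonsing_inv, hinv]
  rw [← LinearMap.charpoly_toMatrix T b, ← LinearMap.charpoly_toMatrix S b,
    Matrix.reverse_charpoly, ← LinearMap.det_toMatrix b T, finrank_eq_card_chooseBasisIndex]
  change B.charpoly = _ * C B.det * A.charpolyRev
  rw [← hdet, ← Matrix.charpoly_inv A hA, hinv]

theorem reverse_charpoly_mul_eq_self_of_involutions {T₁ T₂ : End R M}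
    (hT₁ : T₁ * T₁ = 1) (hT₂ : T₂ * T₂ = 1) (hdim : Even (finrank R M))
    (hdet : LinearMap.det (T₁ * T₂) = 1) :
    (T₁ * T₂).charpoly.reverse = (T₁ * T₂).charpoly := by
  have hinv : (T₁ * T₂) * (T₂ * T₁) = 1 := by
    rw [mul_assoc, ← mul_assoc T₂, hT₂, one_mul, hT₁]
  have hdet' : LinearMap.det (T₂ * T₁) = 1 := by rw [map_mul, mul_comm, ← map_mul, hdet]
  conv_rhs => rw [linearMap_charpoly_mul_comm, charpoly_eq_det_mul_reverse_of_mul_eq_one hinv,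
    hdet', hdim.neg_one_pow, C_1, one_mul, one_mul]

end Charpoly

section FiniteDimensional

variable {K V : Type*} [Field K] [AddCommGroup V] [Module K V] [FiniteDimensional K V]

theorem det_eq_neg_one_pow_of_mul_self_eq_one {T : End K V} (hT : T * T = 1) :
    LinearMap.det T = (-1) ^ finrank K (V ⧸ LinearMap.ker (T - 1)) := by
  set W := LinearMap.ker (T - 1)
  have mem_W {v : V} : v ∈ W ↔ T v = v := by simp [W, sub_eq_zero]
  have hTT (v : V) : T (T v) = v := LinearMap.congr_fun hT v
  have hW : W ≤ W.comap T := fun v hv => by rwa [Submodule.mem_comap, mem_W.mp hv]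
  have hsub : T.restrict hW = LinearMap.id := by
    ext v
    exact mem_W.mp v.2
  have hquot : W.mapQ W T hW = (-1 : K) • LinearMap.id := by
    ext v
    change Submodule.Quotient.mk (p := W) (T v) = (-1 : K) • Submodule.Quotient.mk v
    rw [← Submodule.Quotient.mk_smul, Submodule.Quotient.eq, mem_W]
    simp [hTT, add_comm]
  rw [T.det_eq_det_mul_det W hW, hsub, hquot, LinearMap.det_smul, LinearMap.det_id,
    LinearMap.det_id, one_mul, mul_one]

theorem det_mul_eq_one_of_involutions {T₁ T₂ : End K V} (hT₁ : T₁ * T₁ = 1) (hT₂ : T₂ * T₂ = 1)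
    (hfix : finrank K (LinearMap.ker (T₁ - 1)) ≡ finrank K (LinearMap.ker (T₂ - 1)) [MOD 2]) :
    LinearMap.det (T₁ * T₂) = 1 := by
  have hcodim₁ := (LinearMap.ker (T₁ - 1)).finrank_quotient_add_finrank
  have hcodim₂ := (LinearMap.ker (T₂ - 1)).finrank_quotient_add_finrank
  rw [map_mul, det_eq_neg_one_pow_of_mul_self_eq_one hT₁,
    det_eq_neg_one_pow_of_mul_self_eq_one hT₂, ← pow_add]
  refine Even.neg_one_pow (Nat.even_iff.mpr ?_)
  unfold Nat.ModEq at hfix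
  omega

theorem charpoly_separable_of_injective_eigenvalues {ι : Type*} [Fintype ι] {S : End K V}
    {μ : ι → K} (hinj : Function.Injective μ) (hμ : ∀ i, S.HasEigenvalue (μ i))
    (hcard : Fintype.card ι = finrank K V) : S.charpoly.Separable := by
  have hdvd : ∏ i, (X - C (μ i)) ∣ S.charpoly :=
    Fintype.prod_dvd_of_coprime (pairwise_coprime_X_sub_C hinj) fun i =>
      dvd_iff_isRoot.mpr (S.hasEigenvalue_iff_isRoot_charpoly (μ i) |>.mp (hμ i))
  have hprod : S.charpoly = ∏ i, (X - C (μ i)) := by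
    refine eq_of_monic_of_dvd_of_natDegree_le (monic_prod_X_sub_C μ _) S.charpoly_monic hdvd ?_
    rw [S.charpoly_natDegree, natDegree_finsetProd_X_sub_C_eq_card, Finset.card_univ, hcard]
  exact hprod.symm ▸ separable_prod_X_sub_C_iff.mpr hinj

theorem stmt_3_general {T₁ T₂ : End K V} (hT₁ : T₁ * T₁ = 1) (hT₂ : T₂ * T₂ = 1)
    (hdim : Even (finrank K V))
    (hfix : finrank K (LinearMap.ker (T₁ - 1)) ≡ finrank K (LinearMap.ker (T₂ - 1)) [MOD 2])
    (hsep : (T₁ * T₂).charpoly.Separable) :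
    ¬ (T₁ * T₂).HasEigenvalue 1 ∧ ¬ (T₁ * T₂).HasEigenvalue (-1) := by
  have hrev : (T₁ * T₂).charpoly.reverse = (T₁ * T₂).charpoly :=
    reverse_charpoly_mul_eq_self_of_involutions hT₁ hT₂ hdim
      (det_mul_eq_one_of_involutions hT₁ hT₂ hfix)
  have hdeg : Even (T₁ * T₂).charpoly.natDegree := by rwa [LinearMap.charpoly_natDegree]
  simp only [End.hasEigenvalue_iff_isRoot_charpoly]
  exact ⟨not_isRoot_of_separable_of_reverse_eq_self hsep hrev hdeg (one_pow 2),
    not_isRoot_of_separable_of_reverse_eq_self hsep hrev hdeg neg_one_sq⟩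

end FiniteDimensional

/-- If `T₁, T₂` are ℂ-linear involutions of `ℂ^{2p}` whose fixed-point spaces have dimension `p`
and intersect trivially, and `S = T₁ ∘ T₂` has `2p` distinct eigenvalues, then neither `1`
nor `−1` is an eigenvalue of `S`. -/
theorem stmt_3 (p : ℕ) (hp : 1 ≤ p)
    (T₁ T₂ : (Fin (2 * p) → ℂ) →ₗ[ℂ] (Fin (2 * p) → ℂ))
    (hT₁ : T₁ ∘ₗ T₁ = LinearMap.id) (hT₂ : T₂ ∘ₗ T₂ = LinearMap.id)
    (hfix₁ : Module.finrank ℂ (LinearMap.ker (T₁ - LinearMap.id)) = p)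
    (hfix₂ : Module.finrank ℂ (LinearMap.ker (T₂ - LinearMap.id)) = p)
    (hfix : LinearMap.ker (T₁ - LinearMap.id) ⊓ LinearMap.ker (T₂ - LinearMap.id) = ⊥)
    (μ : Fin (2 * p) → ℂ) (hμinj : Function.Injective μ)
    (hμ : ∀ i, Module.End.HasEigenvalue
      (T₁ ∘ₗ T₂ : Module.End ℂ (Fin (2 * p) → ℂ)) (μ i)) :
    ¬ Module.End.HasEigenvalue (T₁ ∘ₗ T₂ : Module.End ℂ (Fin (2 * p) → ℂ)) 1 ∧
      ¬ Module.End.HasEigenvalue (T₁ ∘ₗ T₂ : Module.End ℂ (Fin (2 * p) → ℂ)) (-1) := by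
  exact stmt_3_general hT₁ hT₂ (by simp) (congrArg (· % 2) (hfix₁.trans hfix₂.symm))
    (charpoly_separable_of_injective_eigenvalues hμinj hμ (by simp))
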